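/- For every 1 ≤ s ≤ p−1: G_s(E^{p−1}F^{p−1}) = 2(−1)^{p−s−1}([p−1]!)²/[s]². Moreover, for 2 ≤ s ≤ p−2: G_s(E^{p−2}F^{p−2}K) = 2(−1)^{p−s−1} ([p−1]!)²/[s]² · q^{−2}[2]/([s−1][s+1]). (These follow from the action E^{p−1}F^{p−1} b₀ = (−α)^{p−s−1} α^{s−1} ([p−1]!)²/[s]² · a₀ on P^α(s), with E^{p−1}F^{p−1} annihilating all other standard basis vectors.) -/

import Mathlib

noncomputable section

open scoped TensorProduct

namespace Uqsl2

/-- Generators of the restricted quantum group. -/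
inductive gen : Type | E | F | K | Kinv

/-- The primitive `2p`-th root of unity `q = e^{iπ/p}`. -/
def q (p : ℕ) : ℂ := Complex.exp (Real.pi * Complex.I / p)

/-- The `q`-integer `[n] = (q^n - q^{-n})/(q - q^{-1})`. -/
def qi (p : ℕ) (n : ℤ) : ℂ := (q p ^ n - q p ^ (-n)) / (q p - (q p)⁻¹)

/-- The `q`-factorial `[m]!`. -/
def qfact (p m : ℕ) : ℂ := ∏ i ∈ Finset.range m, qi p (i + 1)

open FreeAlgebra in
/-- The defining relations of `Ū_q(sl₂)`. -/
inductive rel (p : ℕ) : FreeAlgebra ℂ gen → FreeAlgebra ℂ gen → Prop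
  | KKinv : rel p (ι ℂ gen.K * ι ℂ gen.Kinv) 1
  | KinvK : rel p (ι ℂ gen.Kinv * ι ℂ gen.K) 1
  | Ep : rel p (ι ℂ gen.E ^ p) 0
  | Fp : rel p (ι ℂ gen.F ^ p) 0
  | K2p : rel p (ι ℂ gen.K ^ (2 * p)) 1
  | KE : rel p (ι ℂ gen.K * ι ℂ gen.E) (q p ^ 2 • (ι ℂ gen.E * ι ℂ gen.K))
  | KF : rel p (ι ℂ gen.K * ι ℂ gen.F) ((q p ^ 2)⁻¹ • (ι ℂ gen.F * ι ℂ gen.K))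
  | EF : rel p (ι ℂ gen.E * ι ℂ gen.F - ι ℂ gen.F * ι ℂ gen.E)
             ((q p - (q p)⁻¹)⁻¹ • (ι ℂ gen.K - ι ℂ gen.Kinv))

/-- The restricted quantum group `Ū_q(sl₂)`, presented by generators and relations. -/
abbrev Uq (p : ℕ) := RingQuot (rel p)

def EE (p : ℕ) : Uq p := RingQuot.mkAlgHom ℂ (rel p) (FreeAlgebra.ι ℂ gen.E)
def FF (p : ℕ) : Uq p := RingQuot.mkAlgHom ℂ (rel p) (FreeAlgebra.ι ℂ gen.F)
def KK (p : ℕ) : Uq p := RingQuot.mkAlgHom ℂ (rel p) (FreeAlgebra.ι ℂ gen.K)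
def KKinv (p : ℕ) : Uq p := RingQuot.mkAlgHom ℂ (rel p) (FreeAlgebra.ι ℂ gen.Kinv)

/-! ### The simple modules `X^α(s)` as matrix representations -/

/-- Matrix of `K` on `X^α(s)` in the canonical basis. -/
def XK (p : ℕ) (α : ℂ) (s : ℕ) : Matrix (Fin s) (Fin s) ℂ :=
  Matrix.diagonal fun i => α * q p ^ ((s : ℤ) - 1 - 2 * (i : ℕ))

/-- Matrix of `E` on `X^α(s)` in the canonical basis. -/
def XE (p : ℕ) (α : ℂ) (s : ℕ) : Matrix (Fin s) (Fin s) ℂ :=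
  Matrix.of fun i j =>
    if (i : ℕ) + 1 = (j : ℕ) then α * qi p (j : ℕ) * qi p ((s : ℤ) - (j : ℕ)) else 0

/-- Matrix of `F` on `X^α(s)` in the canonical basis. -/
def XF (s : ℕ) : Matrix (Fin s) (Fin s) ℂ :=
  Matrix.of fun i j => if (i : ℕ) = (j : ℕ) + 1 then (1 : ℂ) else 0

/-- The statement that `ρX α s` is the representation on `X^α(s)` for the relevant
values of `α` and `s`. -/
def IsXRep (p : ℕ) (ρX : (α : ℂ) → (s : ℕ) → (Uq p →ₐ[ℂ] Matrix (Fin s) (Fin s) ℂ)) : Prop :=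
  ∀ α : ℂ, (α = 1 ∨ α = -1) → ∀ s : ℕ, 1 ≤ s → s ≤ p →
    ρX α s (KK p) = XK p α s ∧ ρX α s (EE p) = XE p α s ∧ ρX α s (FF p) = XF s

/-! ### The projective modules `P^α(s)` as matrix representations -/

/-- Index for the standard basis `(b_i, x_j, y_k, a_l)` of `P^α(s)`. -/
abbrev PIdx (p s : ℕ) := Fin s ⊕ (Fin (p - s) ⊕ (Fin (p - s) ⊕ Fin s))

/-- Diagonal of the matrix of `K` on `P^α(s)`. -/
def PKdiag (p : ℕ) (α : ℂ) (s : ℕ) : PIdx p s → ℂ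
  | .inl i => α * q p ^ ((s : ℤ) - 1 - 2 * (i : ℕ))
  | .inr (.inl j) => -α * q p ^ ((p : ℤ) - s - 1 - 2 * (j : ℕ))
  | .inr (.inr (.inl k)) => -α * q p ^ ((p : ℤ) - s - 1 - 2 * (k : ℕ))
  | .inr (.inr (.inr l)) => α * q p ^ ((s : ℤ) - 1 - 2 * (l : ℕ))

/-- Matrix of `K` on `P^α(s)` in the standard basis. -/
def PK (p : ℕ) (α : ℂ) (s : ℕ) : Matrix (PIdx p s) (PIdx p s) ℂ :=
  Matrix.diagonal (PKdiag p α s)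

/-- Matrix of `E` on `P^α(s)` in the standard basis. -/
def PE (p : ℕ) (α : ℂ) (s : ℕ) : Matrix (PIdx p s) (PIdx p s) ℂ :=
  Matrix.of fun i j =>
    match i, j with
    | .inl i, .inl j =>
        if (i : ℕ) + 1 = (j : ℕ) then α * qi p (j : ℕ) * qi p ((s : ℤ) - (j : ℕ)) else 0
    | .inr (.inl jx), .inl j => if (j : ℕ) = 0 ∧ (jx : ℕ) + 1 = p - s then 1 else 0
    | .inr (.inr (.inr l)), .inl j => if (l : ℕ) + 1 = (j : ℕ) then 1 else 0
    | .inr (.inl i), .inr (.inl j) =>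
        if (i : ℕ) + 1 = (j : ℕ) then -α * qi p (j : ℕ) * qi p ((p : ℤ) - s - (j : ℕ)) else 0
    | .inr (.inr (.inl i)), .inr (.inr (.inl k)) =>
        if (i : ℕ) + 1 = (k : ℕ) then -α * qi p (k : ℕ) * qi p ((p : ℤ) - s - (k : ℕ)) else 0
    | .inr (.inr (.inr l)), .inr (.inr (.inl k)) =>
        if (k : ℕ) = 0 ∧ (l : ℕ) + 1 = s then 1 else 0
    | .inr (.inr (.inr i)), .inr (.inr (.inr l)) =>
        if (i : ℕ) + 1 = (l : ℕ) then α * qi p (l : ℕ) * qi p ((s : ℤ) - (l : ℕ)) else 0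
    | _, _ => 0

/-- Matrix of `F` on `P^α(s)` in the standard basis. -/
def PF (p s : ℕ) : Matrix (PIdx p s) (PIdx p s) ℂ :=
  Matrix.of fun i j =>
    match i, j with
    | .inl i, .inl j => if (i : ℕ) = (j : ℕ) + 1 then (1 : ℂ) else 0
    | .inr (.inr (.inl k)), .inl j => if (j : ℕ) + 1 = s ∧ (k : ℕ) = 0 then 1 else 0
    | .inr (.inl i), .inr (.inl j) => if (i : ℕ) = (j : ℕ) + 1 then 1 else 0
    | .inr (.inr (.inr l)), .inr (.inl j) => if (j : ℕ) + 1 = p - s ∧ (l : ℕ) = 0 then 1 else 0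
    | .inr (.inr (.inl i)), .inr (.inr (.inl k)) => if (i : ℕ) = (k : ℕ) + 1 then 1 else 0
    | .inr (.inr (.inr i)), .inr (.inr (.inr l)) => if (i : ℕ) = (l : ℕ) + 1 then 1 else 0
    | _, _ => 0

/-- The statement that `ρP α s` is the representation on `P^α(s)` for the relevant
values of `α` and `s`. -/
def IsPRep (p : ℕ)
    (ρP : (α : ℂ) → (s : ℕ) → (Uq p →ₐ[ℂ] Matrix (PIdx p s) (PIdx p s) ℂ)) : Prop :=
  ∀ α : ℂ, (α = 1 ∨ α = -1) → ∀ s : ℕ, 1 ≤ s → s ≤ p - 1 →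
    ρP α s (KK p) = PK p α s ∧ ρP α s (EE p) = PE p α s ∧ ρP α s (FF p) = PF p s

/-! ### Symmetric linear forms, characters, and the forms `G_s` -/

/-- Symmetric linear forms. -/
def IsSLF (p : ℕ) (φ : Uq p →ₗ[ℂ] ℂ) : Prop := ∀ x y : Uq p, φ (x * y) = φ (y * x)

/-- The character of a matrix representation. -/
def chiOf (p : ℕ) {n : Type} [Fintype n] [DecidableEq n]
    (ρ : Uq p →ₐ[ℂ] Matrix n n ℂ) : Uq p →ₗ[ℂ] ℂ :=
  (Matrix.traceLinearMap n ℂ ℂ).comp ρ.toLinearMap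

/-- The matrix entry functional. -/
def entry {n : Type} (i j : n) : Matrix n n ℂ →ₗ[ℂ] ℂ where
  toFun M := M i j
  map_add' _ _ := rfl
  map_smul' _ _ := rfl

/-- The symmetric linear form `G_s = tr H^+_s + tr H^-_{p-s}`. -/
def GOf (p : ℕ)
    (ρP : (α : ℂ) → (s : ℕ) → (Uq p →ₐ[ℂ] Matrix (PIdx p s) (PIdx p s) ℂ))
    (s : ℕ) : Uq p →ₗ[ℂ] ℂ :=
  (∑ i : Fin s,
    (entry (Sum.inr (Sum.inr (Sum.inr i))) (Sum.inl i)).comp (ρP 1 s).toLinearMap) +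
  (∑ j : Fin (p - s),
    (entry (Sum.inr (Sum.inr (Sum.inr j))) (Sum.inl j)).comp (ρP (-1) (p - s)).toLinearMap)

/-! ### Convolution product -/

/-- The convolution product of two linear forms, with respect to a comultiplication `Δ`. -/
def conv (p : ℕ) (Δ : Uq p →ₐ[ℂ] (Uq p ⊗[ℂ] Uq p)) (φ ψ : Uq p →ₗ[ℂ] ℂ) :
    Uq p →ₗ[ℂ] ℂ :=
  (LinearMap.mul' ℂ ℂ).comp ((TensorProduct.map φ ψ).comp Δ.toLinearMap)

/-- The statement that `Δ` is the comultiplication of `Ū_q(sl₂)`. -/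
def IsCoprod (p : ℕ) (Δ : Uq p →ₐ[ℂ] (Uq p ⊗[ℂ] Uq p)) : Prop :=
  Δ (EE p) = 1 ⊗ₜ[ℂ] EE p + EE p ⊗ₜ[ℂ] KK p ∧
  Δ (FF p) = FF p ⊗ₜ[ℂ] 1 + KKinv p ⊗ₜ[ℂ] FF p ∧
  Δ (KK p) = KK p ⊗ₜ[ℂ] KK p ∧
  Δ (KKinv p) = KKinv p ⊗ₜ[ℂ] KKinv p


theorem q_prim (p : ℕ) (hp : 2 ≤ p) : IsPrimitiveRoot (q p) (2 * p) := by
  have h := Complex.isPrimitiveRoot_exp (2 * p) (by omega)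
  have e : q p = Complex.exp (2 * Real.pi * Complex.I / ((2 * p : ℕ) : ℂ)) := by
    unfold q
    congr 1
    have : (p : ℂ) ≠ 0 := by exact_mod_cast (by omega : p ≠ 0)
    push_cast
    field_simp
  rw [e]; exact h

theorem q_ne (p : ℕ) : q p ≠ 0 := Complex.exp_ne_zero _

theorem qp (p : ℕ) (hp : 2 ≤ p) : q p ^ (p : ℤ) = -1 := by
  have h0 : (p : ℂ) ≠ 0 := by exact_mod_cast (by omega : p ≠ 0)
  unfold q
  rw [zpow_natCast, ← Complex.exp_nat_mul, mul_div_cancel₀ _ h0, Complex.exp_pi_mul_I]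

theorem num_ne (p : ℕ) (hp : 2 ≤ p) (n : ℕ) (h1 : 0 < n) (h2 : n < p) :
    q p ^ (n : ℤ) - q p ^ (-(n : ℤ)) ≠ 0 := by
  intro h
  have h3 : q p ^ (n : ℤ) * q p ^ (n : ℤ) = 1 := by
    nth_rewrite 1 [sub_eq_zero.mp h]
    rw [← zpow_add₀ (q_ne p)]; simp
  rw [← zpow_add₀ (q_ne p)] at h3
  have h4 : q p ^ (n + n) = 1 := by exact_mod_cast h3
  have := (q_prim p hp).dvd_of_pow_eq_one _ h4
  have := Nat.le_of_dvd (by omega) this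
  omega

theorem den_ne (p : ℕ) (hp : 2 ≤ p) : q p - (q p)⁻¹ ≠ 0 := by
  have := num_ne p hp 1 (by omega) (by omega)
  simpa using this

theorem qi_ne (p : ℕ) (hp : 2 ≤ p) (n : ℕ) (h1 : 0 < n) (h2 : n < p) : qi p n ≠ 0 :=
  div_ne_zero (num_ne p hp n h1 h2) (den_ne p hp)

theorem qi_one (p : ℕ) (hp : 2 ≤ p) : qi p 1 = 1 := by
  unfold qi
  have := den_ne p hp
  simp [this]

theorem qi_refl (p : ℕ) (hp : 2 ≤ p) (n : ℤ) : qi p (p - n) = qi p n := by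
  unfold qi
  congr 1
  have h := qp p hp
  have hq := q_ne p
  rw [neg_sub, zpow_sub₀ hq, zpow_sub₀ hq, h, zpow_neg]
  field_simp
  ring

theorem qi_key (p : ℕ) (s : ℤ) :
    q p ^ (s - 1) * qi p (s + 1) - q p ^ (s + 1) * qi p (s - 1) = qi p 2 := by
  unfold qi
  have hq := q_ne p
  rw [mul_div_assoc', mul_div_assoc', ← sub_div]
  congr 1
  simp only [mul_sub, ← zpow_add₀ hq]
  ring_nf

/-- `∏_{k=1}^{n} [k][n+1-k] = ([n]!)²`. -/
theorem prod_sq (p n : ℕ) (α : ℂ) :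
    ∏ j ∈ Finset.range n, (α * qi p ((j + 1 : ℕ) : ℤ) * qi p ((n : ℤ) + 1 - (j + 1 : ℕ))) =
      α ^ n * qfact p n ^ 2 := by
  rw [Finset.prod_mul_distrib, Finset.prod_mul_distrib, Finset.prod_const, Finset.card_range]
  have : ∏ j ∈ Finset.range n, qi p ((n : ℤ) + 1 - (j + 1 : ℕ)) = qfact p n := by
    unfold qfact
    rw [← Finset.prod_range_reflect]
    refine Finset.prod_congr rfl fun j hj => ?_
    have := Finset.mem_range.mp hj
    congr 1
    push_cast [Nat.sub_sub, Nat.cast_sub (show 1 + j ≤ n by omega)]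
    ring
  rw [this]
  unfold qfact
  push_cast
  ring

theorem qfact_split (p : ℕ) (hp : 2 ≤ p) (s : ℕ) (h1 : 1 ≤ s) (h2 : s < p) :
    qfact p (p - 1) = qfact p (p - s - 1) * qfact p (s - 1) * qi p s := by
  have e : p - 1 = (p - s - 1) + s := by omega
  have e2 : qfact p (s - 1) * qi p s = qfact p s := by
    obtain ⟨t, rfl⟩ := Nat.exists_eq_add_of_le h1
    unfold qfact
    rw [show 1 + t = t + 1 by omega, Finset.prod_range_succ]
    simp
  rw [mul_assoc, e2, e]
  unfold qfact
  rw [Finset.prod_range_add]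
  congr 1
  rw [← Finset.prod_range_reflect]
  refine Finset.prod_congr rfl fun j hj => ?_
  have := Finset.mem_range.mp hj
  rw [← qi_refl p hp]
  congr 1
  have : p - s - 1 + (s - 1 - j) + 1 + (j + 1) = p := by omega
  zify at this
  push_cast
  linarith

/-- Basis vectors, with `0` for out of range indices. -/
def vb (p s n : ℕ) : PIdx p s → ℂ
  | .inl i => if (i : ℕ) = n then 1 else 0
  | _ => 0

def vy (p s n : ℕ) : PIdx p s → ℂ
  | .inr (.inr (.inl i)) => if (i : ℕ) = n then 1 else 0
  | _ => 0

def va (p s n : ℕ) : PIdx p s → ℂ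
  | .inr (.inr (.inr i)) => if (i : ℕ) = n then 1 else 0
  | _ => 0

theorem vb_eq (p s n : ℕ) (h : n < s) : vb p s n = Pi.single (.inl ⟨n, h⟩) 1 := by
  ext x
  rcases x with i | i | i | i <;> simp [vb, Pi.single_apply, Fin.ext_iff]

theorem vy_eq (p s n : ℕ) (h : n < p - s) :
    vy p s n = Pi.single (.inr (.inr (.inl ⟨n, h⟩))) 1 := by
  ext x
  rcases x with i | i | i | i <;> simp [vy, Pi.single_apply, Fin.ext_iff]

theorem va_eq (p s n : ℕ) (h : n < s) :
    va p s n = Pi.single (.inr (.inr (.inr ⟨n, h⟩))) 1 := by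
  ext x
  rcases x with i | i | i | i <;> simp [va, Pi.single_apply, Fin.ext_iff]

theorem vy_out (p s n : ℕ) (h : p - s ≤ n) : vy p s n = 0 := by
  ext x
  rcases x with i | i | i | i <;> simp [vy]
  have := i.2
  omega

open Matrix

theorem F_b (p s n : ℕ) (h : n + 1 < s) : PF p s *ᵥ vb p s n = vb p s (n + 1) := by
  rw [vb_eq p s n (by omega), mulVec_single_one]
  ext x
  rcases x with i | i | i | i <;> simp [PF, vb, col_apply]
  omega

theorem F_b_last (p s n : ℕ) (h : n + 1 = s) : PF p s *ᵥ vb p s n = vy p s 0 := by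
  rw [vb_eq p s n (by omega), mulVec_single_one]
  ext x
  rcases x with i | i | i | i <;> simp [PF, vy, col_apply, h]
  have := i.2
  omega

theorem F_y (p s n : ℕ) : PF p s *ᵥ vy p s n = vy p s (n + 1) := by
  by_cases h : n < p - s
  · rw [vy_eq p s n h, mulVec_single_one]
    ext x
    rcases x with i | i | i | i <;> simp [PF, vy, col_apply]
  · rw [vy_out p s n (by omega), vy_out p s (n + 1) (by omega), mulVec_zero]

theorem E_y (p : ℕ) (α : ℂ) (s n : ℕ) (h : n + 1 < p - s) : PE p α s *ᵥ vy p s (n + 1) =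
    (-α * qi p ((n + 1 : ℕ) : ℤ) * qi p ((p : ℤ) - s - (n + 1 : ℕ))) • vy p s n := by
  rw [vy_eq p s _ h, mulVec_single_one]
  ext x
  rcases x with i | i | i | i <;> simp [PE, vy, col_apply]

theorem E_y_zero (p : ℕ) (α : ℂ) (s : ℕ) (h : 0 < p - s) : PE p α s *ᵥ vy p s 0 =
    va p s (s - 1) := by
  rw [vy_eq p s _ h, mulVec_single_one]
  ext x
  rcases x with i | i | i | i <;> simp [PE, va, col_apply]
  have := i.2
  congr 1
  simp only [eq_iff_iff]
  omega

theorem E_a (p : ℕ) (α : ℂ) (s n : ℕ) (h : n + 1 < s) : PE p α s *ᵥ va p s (n + 1) =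
    (α * qi p ((n + 1 : ℕ) : ℤ) * qi p ((s : ℤ) - (n + 1 : ℕ))) • va p s n := by
  rw [va_eq p s _ h, mulVec_single_one]
  ext x
  rcases x with i | i | i | i <;> simp [PE, va, col_apply]

theorem Fpow_b (p s i n : ℕ) (h : i + n < s) : PF p s ^ n *ᵥ vb p s i = vb p s (i + n) := by
  induction n with
  | zero => simp
  | succ n ih =>
    rw [pow_succ', ← mulVec_mulVec, ih (by omega), F_b p s _ (by omega)]; rfl

theorem Fpow_y (p s i n : ℕ) : PF p s ^ n *ᵥ vy p s i = vy p s (i + n) := by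
  induction n with
  | zero => simp
  | succ n ih =>
    rw [pow_succ', ← mulVec_mulVec, ih, F_y p s _]; rfl

theorem Fpow (p s i n : ℕ) (hi : i < s) (h : s ≤ i + n) :
    PF p s ^ n *ᵥ vb p s i = vy p s (i + n - s) := by
  have e : n = (i + n - s) + (1 + (s - 1 - i)) := by omega
  conv_lhs => rw [e]
  rw [pow_add, pow_add, ← mulVec_mulVec, ← mulVec_mulVec, Fpow_b p s i _ (by omega), pow_one,
    F_b_last p s _ (by omega), Fpow_y]
  simp

def cA (p : ℕ) (α : ℂ) (s n : ℕ) : ℂ := ∏ j ∈ Finset.range n,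
  (-α * qi p ((j + 1 : ℕ) : ℤ) * qi p ((p : ℤ) - s - (j + 1 : ℕ)))

def cD (p : ℕ) (α : ℂ) (s i n : ℕ) : ℂ := ∏ j ∈ Finset.range n,
  (α * qi p ((i + j + 1 : ℕ) : ℤ) * qi p ((s : ℤ) - (i + j + 1 : ℕ)))

theorem Epow_y (p : ℕ) (α : ℂ) (s n : ℕ) (h : n < p - s) :
    PE p α s ^ n *ᵥ vy p s n = cA p α s n • vy p s 0 := by
  induction n with
  | zero => simp [cA]
  | succ n ih =>
    rw [pow_succ, ← mulVec_mulVec, E_y p α s n h, mulVec_smul, ih (by omega), smul_smul]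
    unfold cA
    rw [Finset.prod_range_succ, mul_comm]

theorem Epow_a (p : ℕ) (α : ℂ) (s i n : ℕ) (h : i + n < s) :
    PE p α s ^ n *ᵥ va p s (i + n) = cD p α s i n • va p s i := by
  induction n with
  | zero => simp [cD]
  | succ n ih =>
    rw [pow_succ, ← mulVec_mulVec, ← add_assoc, E_a p α s _ (by omega), mulVec_smul,
      ih (by omega), smul_smul]
    unfold cD
    rw [Finset.prod_range_succ, mul_comm]

theorem diag_entry (p : ℕ) (α : ℂ) (s n : ℕ) (hs : s < p) (hn : s ≤ n) (i : Fin s) :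
    (PE p α s ^ n * PF p s ^ n) (.inr (.inr (.inr i))) (.inl i) =
      if (i : ℕ) + n < p then cA p α s (i + n - s) * cD p α s i (s - 1 - i) else 0 := by
  have hi := i.2
  have e : (PE p α s ^ n * PF p s ^ n) (.inr (.inr (.inr i))) (.inl i) =
      ((PE p α s ^ n * PF p s ^ n) *ᵥ vb p s i) (.inr (.inr (.inr i))) := by
    rw [vb_eq p s i hi, mulVec_single_one]; rfl
  rw [e, ← mulVec_mulVec, Fpow p s i n hi (by omega)]
  split_ifs with h
  · have e2 : n = (s - 1 - i) + (1 + (i + n - s)) := by omega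
    have e3 : PE p α s ^ n = PE p α s ^ (s - 1 - i) * (PE p α s ^ 1 * PE p α s ^ (i + n - s)) := by
      rw [← pow_add, ← pow_add, ← e2]
    have e4 := Epow_a p α s i (s - 1 - i) (by omega)
    rw [show (i : ℕ) + (s - 1 - i) = s - 1 by omega] at e4
    rw [e3, ← mulVec_mulVec, ← mulVec_mulVec, Epow_y p α s _ (by omega), pow_one, mulVec_smul,
      E_y_zero p α s (by omega), mulVec_smul, e4]
    simp [va]
  · rw [vy_out p s _ (by omega)]; simp

theorem cA_top (p : ℕ) (α : ℂ) (s : ℕ) (hs : s < p) :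
    cA p α s (p - s - 1) = (-α) ^ (p - s - 1) * qfact p (p - s - 1) ^ 2 := by
  rw [← prod_sq]
  unfold cA
  refine Finset.prod_congr rfl fun j hj => ?_
  congr 2
  have : p - s - 1 + 1 + s = p := by omega
  zify at this
  linarith

theorem cD_top (p : ℕ) (α : ℂ) (s : ℕ) (hs : 1 ≤ s) :
    cD p α s 0 (s - 1) = α ^ (s - 1) * qfact p (s - 1) ^ 2 := by
  rw [← prod_sq]
  unfold cD
  refine Finset.prod_congr rfl fun j hj => ?_
  have : s - 1 + 1 = s := by omega
  zify at this
  rw [this]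
  simp

theorem cA_step (p : ℕ) (hp : 2 ≤ p) (α : ℂ) (s : ℕ) (hs : s + 2 ≤ p) :
    cA p α s (p - s - 1) = cA p α s (p - 2 - s) * (-α * qi p (s + 1)) := by
  have e : p - s - 1 = (p - 2 - s) + 1 := by omega
  rw [e]
  unfold cA
  rw [Finset.prod_range_succ]
  congr 1
  have h : p - 2 - s + 1 + (s + 1) = p := by omega
  zify at h
  have h1 : ((p - 2 - s + 1 : ℕ) : ℤ) = p - (s + 1) := by push_cast; linarith
  rw [h1, qi_refl p hp, show (p : ℤ) - s - (p - (s + 1)) = 1 by ring, qi_one p hp, mul_one]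

theorem cD_step (p : ℕ) (hp : 2 ≤ p) (α : ℂ) (s : ℕ) (hs : 2 ≤ s) :
    cD p α s 0 (s - 1) = cD p α s 1 (s - 1 - 1) * (α * qi p (s - 1)) := by
  obtain ⟨t, rfl⟩ := Nat.exists_eq_add_of_le hs
  rw [show 2 + t - 1 = t + 1 by omega]
  unfold cD
  rw [Finset.prod_range_succ']
  congr 1
  · refine Finset.prod_congr (by simp) fun j hj => ?_
    rw [show 0 + (j + 1) + 1 = 1 + j + 1 by omega]
  · simp [qi_one p hp]

theorem trace_one (p : ℕ) (hp : 2 ≤ p) (α : ℂ) (s : ℕ) (h1 : 1 ≤ s) (hs : s < p) :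
    ∑ i : Fin s, (PE p α s ^ (p - 1) * PF p s ^ (p - 1)) (.inr (.inr (.inr i))) (.inl i) =
      (-α) ^ (p - s - 1) * α ^ (s - 1) * (qfact p (p - 1) ^ 2 / qi p s ^ 2) := by
  simp_rw [diag_entry p α s (p - 1) hs (by omega)]
  obtain ⟨t, rfl⟩ := Nat.exists_eq_add_of_le' h1
  rw [Fin.sum_univ_succ, Finset.sum_eq_zero]
  · have := qi_ne p hp (t + 1) (by omega) hs
    rw [if_pos (by simp; omega), qfact_split p hp (t + 1) h1 hs]
    have a := cA_top p α (t + 1) hs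
    have d := cD_top p α (t + 1) h1
    simp only [Fin.val_zero, zero_add, Nat.sub_zero]
    rw [d, show p - 1 - (t + 1) = p - (t + 1) - 1 by omega, a]
    field_simp
    ring
  · intro i _
    rw [if_neg]
    simp; omega

theorem trace_two (p : ℕ) (hp : 2 ≤ p) (α : ℂ) (hα : α ≠ 0) (s : ℕ) (h1 : 2 ≤ s)
    (hs : s + 2 ≤ p) :
    ∑ i : Fin s, (PE p α s ^ (p - 2) * PF p s ^ (p - 2) * PK p α s)
        (.inr (.inr (.inr i))) (.inl i) =
      (-α) ^ (p - s - 1) * α ^ (s - 1) * (qfact p (p - 1) ^ 2 / qi p s ^ 2) *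
      (q p ^ (-2 : ℤ) * qi p 2 / (qi p ((s : ℤ) - 1) * qi p ((s : ℤ) + 1))) := by
  have hq := q_ne p
  have n0 := qi_ne p hp s (by omega) (by omega)
  have n1 := qi_ne p hp (s + 1) (by omega) (by omega)
  have n2 := qi_ne p hp (s - 1) (by omega) (by omega)
  rw [Nat.cast_sub (by omega)] at n2
  push_cast at n1 n2
  have key := qi_key p s
  have a := cA_top p α s (by omega)
  have d := cD_top p α s (by omega)
  have a2 := cA_step p hp α s hs
  have d2 := cD_step p hp α s h1
  have sp := qfact_split p hp s (by omega) (by omega)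
  have e : ∀ i : Fin s, (PE p α s ^ (p - 2) * PF p s ^ (p - 2) * PK p α s)
        (.inr (.inr (.inr i))) (.inl i) = (if (i : ℕ) + (p - 2) < p then
          cA p α s (i + (p - 2) - s) * cD p α s i (s - 1 - i) else 0) *
          (α * q p ^ ((s : ℤ) - 1 - 2 * (i : ℕ))) := by
    intro i
    rw [← diag_entry p α s (p - 2) (by omega) (by omega)]
    unfold PK
    rw [Matrix.mul_diagonal]
    rfl
  simp_rw [e]
  have e0 : ∑ i : Fin s, (if (i : ℕ) + (p - 2) < p then
          cA p α s (i + (p - 2) - s) * cD p α s i (s - 1 - i) else 0) *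
          (α * q p ^ ((s : ℤ) - 1 - 2 * (i : ℕ))) =
      cA p α s (p - 2 - s) * cD p α s 0 (s - 1) * (α * q p ^ ((s : ℤ) - 1)) +
      cA p α s (p - s - 1) * cD p α s 1 (s - 1 - 1) * (α * q p ^ ((s : ℤ) - 1 - 2)) := by
    rw [Fin.sum_univ_eq_sum_range (fun i => (if i + (p - 2) < p then
          cA p α s (i + (p - 2) - s) * cD p α s i (s - 1 - i) else 0) *
          (α * q p ^ ((s : ℤ) - 1 - 2 * (i : ℕ)))) s]
    obtain ⟨t, rfl⟩ := Nat.exists_eq_add_of_le' h1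
    rw [Finset.sum_range_succ', Finset.sum_range_succ', Finset.sum_eq_zero]
    · rw [if_pos (by omega), if_pos (by omega),
        show 0 + 1 + (p - 2) - (t + 2) = p - (t + 2) - 1 by omega]
      simp [add_comm]
    · intro i _
      rw [if_neg (by omega), zero_mul]
  rw [e0, sp]
  have a3 : cA p α s (p - 2 - s) = (-α) ^ (p - s - 1) * qfact p (p - s - 1) ^ 2 /
      (-α * qi p (s + 1)) := by
    rw [← a, a2]; field_simp
  have d3 : cD p α s 1 (s - 1 - 1) = α ^ (s - 1) * qfact p (s - 1) ^ 2 /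
      (α * qi p (s - 1)) := by
    rw [← d, d2]; field_simp
  rw [a3, d3, a, d, ← key]
  have z1 : q p ^ ((s : ℤ) - 1 - 2) = q p ^ ((s : ℤ) - 1) * q p ^ (-2 : ℤ) := by
    rw [← zpow_add₀ hq]; rfl
  have z2 : q p ^ ((s : ℤ) + 1) * q p ^ (-2 : ℤ) = q p ^ ((s : ℤ) - 1) := by
    rw [← zpow_add₀ hq]; congr 1; ring
  have z3 : q p ^ (-2 : ℤ) * (q p ^ ((s : ℤ) - 1) * qi p (s + 1) - q p ^ ((s : ℤ) + 1) * qi p (s - 1))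
     = q p ^ ((s : ℤ) - 1) * q p ^ (-2 : ℤ) * qi p (s + 1) - q p ^ ((s : ℤ) - 1) * qi p (s - 1) := by
    rw [← z2]; ring
  rw [z1, z3]
  generalize q p ^ ((s : ℤ) - 1) = X
  generalize q p ^ (-2 : ℤ) = Y
  field_simp
  ring

/-- `G_s(E^{p-1}F^{p-1}) = 2(-1)^{p-s-1}([p-1]!)²/[s]²` for
`1 ≤ s ≤ p-1`, and
`G_s(E^{p-2}F^{p-2}K) = 2(-1)^{p-s-1}([p-1]!)²/[s]² · q^{-2}[2]/([s-1][s+1])` for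
`2 ≤ s ≤ p-2`. -/
theorem statement_19 (p : ℕ) (hp : 2 ≤ p)
    (ρP : (α : ℂ) → (s : ℕ) → (Uq p →ₐ[ℂ] Matrix (PIdx p s) (PIdx p s) ℂ))
    (hP : IsPRep p ρP) :
    (∀ s : ℕ, 1 ≤ s → s ≤ p - 1 →
      GOf p ρP s (EE p ^ (p - 1) * FF p ^ (p - 1)) =
        2 * (-1 : ℂ) ^ (p - s - 1) * (qfact p (p - 1)) ^ 2 / (qi p s) ^ 2)
    ∧ (∀ s : ℕ, 2 ≤ s → s ≤ p - 2 →
        GOf p ρP s (EE p ^ (p - 2) * FF p ^ (p - 2) * KK p) =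
          2 * (-1 : ℂ) ^ (p - s - 1) * (qfact p (p - 1)) ^ 2 / (qi p s) ^ 2
            * (q p ^ (-2 : ℤ) * qi p 2 / (qi p ((s : ℤ) - 1) * qi p ((s : ℤ) + 1)))) := by
  constructor
  · intro s h1 h2
    obtain ⟨-, E1, F1⟩ := hP 1 (Or.inl rfl) s h1 h2
    obtain ⟨-, E2, F2⟩ := hP (-1) (Or.inr rfl) (p - s) (by omega) (by omega)
    have t1 := trace_one p hp 1 s h1 (by omega)
    have t2 := trace_one p hp (-1) (p - s) (by omega) (by omega)
    rw [Nat.cast_sub (by omega), qi_refl p hp] at t2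
    have : GOf p ρP s (EE p ^ (p - 1) * FF p ^ (p - 1)) =
        (∑ i : Fin s, (PE p 1 s ^ (p - 1) * PF p s ^ (p - 1))
          (.inr (.inr (.inr i))) (.inl i)) +
        (∑ i : Fin (p - s), (PE p (-1) (p - s) ^ (p - 1) * PF p (p - s) ^ (p - 1))
          (.inr (.inr (.inr i))) (.inl i)) := by
      simp [GOf, E1, F1, E2, F2]
      rfl
    rw [this, t1, t2]
    simp
    ring
  · intro s h1 h2
    obtain ⟨K1, E1, F1⟩ := hP 1 (Or.inl rfl) s (by omega) (by omega)
    obtain ⟨K2, E2, F2⟩ := hP (-1) (Or.inr rfl) (p - s) (by omega) (by omega)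
    have t1 := trace_two p hp 1 (by simp) s h1 (by omega)
    have t2 := trace_two p hp (-1) (by simp) (p - s) (by omega) (by omega)
    rw [Nat.cast_sub (by omega), qi_refl p hp, show (p : ℤ) - s - 1 = p - (s + 1) by ring,
      show (p : ℤ) - s + 1 = p - (s - 1) by ring, qi_refl p hp, qi_refl p hp] at t2
    have : GOf p ρP s (EE p ^ (p - 2) * FF p ^ (p - 2) * KK p) =
        (∑ i : Fin s, (PE p 1 s ^ (p - 2) * PF p s ^ (p - 2) * PK p 1 s)
          (.inr (.inr (.inr i))) (.inl i)) +
        (∑ i : Fin (p - s), (PE p (-1) (p - s) ^ (p - 2) * PF p (p - s) ^ (p - 2) *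
          PK p (-1) (p - s)) (.inr (.inr (.inr i))) (.inl i)) := by
      simp [GOf, E1, F1, E2, F2, K1, K2]
      rfl
    rw [this, t1, t2, mul_comm (qi p (s + 1))]
    simp
    ring

end Uqsl2
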